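/- Let p be a prime and let F be a perfectoid field of characteristic p with ring of integers O_F. Then the ring of p-typical Witt vectors W(O_F) (Fontaine's period ring A_inf of the untilts of F) admits a family (𝔭_λ)_{λ∈(0,1)} of prime ideals, indexed by the real interval (0,1), with 𝔭_λ ⊊ 𝔭_μ whenever λ < μ; in particular W(O_F) has uncountable Krull dimension. -/

import Mathlib

/-!
Let `O` be the ring of integers of a perfect valued field of characteristic `p`. For `x = ∑ [xₙ] pⁿ`
in `W(O)`, the Gauss norm `|x|_r = supₙ |xₙ| rⁿ` is a valuation for every `0 < r < 1`. Choose radii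
`rₖ` tending to `1`, scales `ρₖ < 1` and a nonprincipal ultrafilter on `ℕ`. Multiplicativity of the
Gauss norms makes the set of those `x` whose norm `|x|_{rₖ}` is eventually smaller than every power
of `ρₖ` a prime ideal. Fix `0 < |a| < 1` and let `ρₖ = |a| ^ (1 / p ^ f k)`: the ideal grows with
`f`, and strictly so if `f` is replaced by `g` with `g - f → ∞`, because some Witt vector has norm
between `ρₖ²` and `ρₖ` at `rₖ`. The functions `f k = ⌊l k⌋` for `0 < l < 1` give the chain.
-/

open Filter WittVector
open scoped NNReal Topology

section FrobeniusRoot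

variable (p : ℕ) [Fact p.Prime] {R : Type*} [CommRing R] [CharP R p] [PerfectRing R p]

/-- The unique `p ^ n`-th root of an element of a perfect ring of characteristic `p`. -/
noncomputable def frobeniusRoot (n : ℕ) (a : R) : R :=
  (iterateFrobeniusEquiv R p n).symm a

theorem frobeniusRoot_pow_self (n : ℕ) (a : R) : frobeniusRoot p n (a ^ p ^ n) = a :=
  (iterateFrobeniusEquiv R p n).symm_apply_apply a

theorem frobeniusRoot_add_pow (m n : ℕ) (a : R) :
    frobeniusRoot p (m + n) a ^ p ^ n = frobeniusRoot p m a := by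
  rw [frobeniusRoot, add_comm, iterateFrobeniusEquiv_symm_add_apply, ← iterateFrobeniusEquiv_def,
    RingEquiv.apply_symm_apply, frobeniusRoot]

theorem frobeniusRoot_pow (n : ℕ) (a : R) : frobeniusRoot p n a ^ p ^ n = a :=
  (iterateFrobeniusEquiv R p n).apply_symm_apply a

end FrobeniusRoot

section TeichmullerExpansion

variable {p : ℕ} [Fact p.Prime] {R : Type*} [CommRing R]

theorem mem_span_teichmuller_image_iff [IsBezout R] {I : Ideal R} {x : WittVector p R} :
    x ∈ Ideal.span (teichmuller p '' I) ↔ ∃ c ∈ I, teichmuller p c ∣ x := by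
  refine ⟨fun hx ↦ ?_, fun ⟨c, hc, hcx⟩ ↦
    Ideal.mem_of_dvd _ hcx (Ideal.subset_span (Set.mem_image_of_mem _ hc))⟩
  induction hx using Submodule.span_induction with
  | mem x hx => obtain ⟨c, hc, rfl⟩ := hx; exact ⟨c, hc, dvd_rfl⟩
  | zero => exact ⟨0, I.zero_mem, dvd_zero _⟩
  | add x y _ _ hx hy =>
    obtain ⟨⟨c, hc, hcx⟩, d, hd, hdy⟩ := hx, hy
    obtain ⟨a, b, hab⟩ := IsBezout.gcd_eq_sum c d
    refine ⟨IsBezout.gcd c d, hab ▸ add_mem (I.mul_mem_left a hc) (I.mul_mem_left b hd), ?_⟩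
    exact dvd_add ((map_dvd _ (IsBezout.gcd_dvd_left c d)).trans hcx)
      ((map_dvd _ (IsBezout.gcd_dvd_right c d)).trans hdy)
  | smul a x _ hx => obtain ⟨c, hc, hcx⟩ := hx; exact ⟨c, hc, hcx.mul_left a⟩

/-- The ideal of `WittVector p R` generated by the Teichmüller lifts of `I` and `p ^ (n + 1)`.
It serves to bound Teichmüller coefficients up to degree `n`. -/
noncomputable def teichmullerIdeal (I : Ideal R) (n : ℕ) : Ideal (WittVector p R) :=
  Ideal.span (teichmuller p '' I) ⊔ Ideal.span {(p : WittVector p R) ^ (n + 1)}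

theorem mem_teichmullerIdeal_of_pow_dvd {I : Ideal R} {n : ℕ} {x : WittVector p R}
    (h : (p : WittVector p R) ^ (n + 1) ∣ x) : x ∈ teichmullerIdeal I n :=
  Ideal.mem_sup_right (Ideal.mem_span_singleton.2 h)

theorem teichmuller_mul_pow_mem_teichmullerIdeal {I : Ideal R} {n i : ℕ} {c : R}
    (h : i ≤ n → c ∈ I) : teichmuller p c * (p : WittVector p R) ^ i ∈ teichmullerIdeal I n := by
  rcases le_or_gt i n with hi | hi
  · exact Ideal.mem_sup_left
      (Ideal.mul_mem_right _ _ (Ideal.subset_span (Set.mem_image_of_mem _ (h hi))))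
  · exact mem_teichmullerIdeal_of_pow_dvd ((pow_dvd_pow _ hi).mul_left _)

variable [CharP R p] [PerfectRing R p]

/-- The coefficient `xₙ` in the Teichmüller expansion `x = ∑ [xₙ] pⁿ` of a Witt vector over a
perfect ring. -/
noncomputable def teichmullerCoeff (n : ℕ) (x : WittVector p R) : R :=
  frobeniusRoot p n (x.coeff n)

theorem teichmullerCoeff_zero (n : ℕ) : teichmullerCoeff n (0 : WittVector p R) = 0 := by
  simp [teichmullerCoeff, frobeniusRoot]

theorem teichmullerCoeff_teichmuller_mul_pow (n : ℕ) (c : R) :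
    teichmullerCoeff n (teichmuller p c * (p : WittVector p R) ^ n) = c := by
  rw [teichmullerCoeff, teichmuller_mul_pow_coeff, frobeniusRoot_pow_self]

theorem teichmullerCoeff_zero_one : teichmullerCoeff 0 (1 : WittVector p R) = 1 := by
  simpa using teichmullerCoeff_teichmuller_mul_pow (p := p) 0 (1 : R)

/-- The Witt vector `∑ [cₙ] pⁿ`. -/
def teichmullerSeries (c : ℕ → R) : WittVector p R :=
  WittVector.mk p fun n ↦ c n ^ p ^ n

theorem teichmullerCoeff_teichmullerSeries (c : ℕ → R) (n : ℕ) :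
    teichmullerCoeff n (teichmullerSeries c : WittVector p R) = c n :=
  frobeniusRoot_pow_self p n (c n)

theorem teichmullerCoeff_eq_of_pow_dvd_sub {x y : WittVector p R} {n i : ℕ} (hi : i ≤ n)
    (h : (p : WittVector p R) ^ (n + 1) ∣ x - y) :
    teichmullerCoeff i x = teichmullerCoeff i y := by
  rw [← Ideal.mem_span_singleton, mem_span_p_pow_iff_le_coeff_eq_zero,
    ← le_coeff_eq_iff_le_sub_coeff_eq_zero] at h
  rw [teichmullerCoeff, teichmullerCoeff, h i (Nat.lt_succ_of_le hi)]

theorem pow_dvd_sub_sum_teichmullerCoeff (x : WittVector p R) (n : ℕ) :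
    (p : WittVector p R) ^ (n + 1) ∣
      x - ∑ i ∈ Finset.Iic n, teichmuller p (teichmullerCoeff i x) * (p : WittVector p R) ^ i := by
  simpa only [teichmullerCoeff, frobeniusRoot, iterateFrobeniusEquiv_symm] using
    dvd_sub_sum_teichmuller_iterateFrobeniusEquiv_coeff x n

theorem pow_dvd_mul_sub_sum_teichmullerCoeff (x y : WittVector p R) (n : ℕ) :
    (p : WittVector p R) ^ (n + 1) ∣ x * y - ∑ ij ∈ Finset.Iic n ×ˢ Finset.Iic n,
      teichmuller p (teichmullerCoeff ij.1 x * teichmullerCoeff ij.2 y) *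
        (p : WittVector p R) ^ (ij.1 + ij.2) := by
  have h := dvd_mul_sub_mul (pow_dvd_sub_sum_teichmullerCoeff x n)
    (pow_dvd_sub_sum_teichmullerCoeff y n)
  rw [Finset.sum_mul_sum, ← Finset.sum_product'] at h
  simpa only [map_mul, pow_add, mul_mul_mul_comm] using h

theorem teichmullerCoeff_teichmuller_mul (c : R) (x : WittVector p R) (n : ℕ) :
    teichmullerCoeff n (teichmuller p c * x) = c * teichmullerCoeff n x := by
  set y : WittVector p R := teichmullerSeries fun i ↦ c * teichmullerCoeff i x
  have hy (i : ℕ) : teichmullerCoeff i y = c * teichmullerCoeff i x :=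
    teichmullerCoeff_teichmullerSeries _ i
  have h := dvd_sub ((pow_dvd_sub_sum_teichmullerCoeff x n).mul_left (teichmuller p c))
    (pow_dvd_sub_sum_teichmullerCoeff y n)
  simp only [hy, map_mul, mul_assoc, ← Finset.mul_sum, mul_sub, sub_sub_sub_cancel_right] at h
  rw [teichmullerCoeff_eq_of_pow_dvd_sub le_rfl h, hy]

theorem mem_teichmullerIdeal_iff [IsBezout R] {I : Ideal R} {n : ℕ} {x : WittVector p R} :
    x ∈ teichmullerIdeal I n ↔ ∀ i ≤ n, teichmullerCoeff i x ∈ I := by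
  refine ⟨fun hx i hi ↦ ?_, fun hx ↦ ?_⟩
  · obtain ⟨y, hy, z, hz, rfl⟩ := Submodule.mem_sup.1 hx
    obtain ⟨c, hc, a, rfl⟩ := mem_span_teichmuller_image_iff.1 hy
    have hyz : teichmullerCoeff i (teichmuller p c * a + z) = c * teichmullerCoeff i a := by
      rw [← teichmullerCoeff_teichmuller_mul]
      exact teichmullerCoeff_eq_of_pow_dvd_sub hi (by simpa using Ideal.mem_span_singleton.1 hz)
    exact hyz ▸ I.mul_mem_right _ hc
  · rw [← sub_add_cancel x (∑ i ∈ Finset.Iic n, _)]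
    exact add_mem (mem_teichmullerIdeal_of_pow_dvd (pow_dvd_sub_sum_teichmullerCoeff x n))
      (sum_mem fun i hi ↦ teichmuller_mul_pow_mem_teichmullerIdeal fun _ ↦
        hx i (Finset.mem_Iic.1 hi))

theorem mul_mem_teichmullerIdeal {I : Ideal R} {n : ℕ} {x y : WittVector p R}
    (h : ∀ i j, i + j ≤ n → teichmullerCoeff i x * teichmullerCoeff j y ∈ I) :
    x * y ∈ teichmullerIdeal I n := by
  rw [← sub_add_cancel (x * y) (∑ ij ∈ Finset.Iic n ×ˢ Finset.Iic n, _)]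
  exact add_mem (mem_teichmullerIdeal_of_pow_dvd (pow_dvd_mul_sub_sum_teichmullerCoeff x y n))
    (sum_mem fun ij _ ↦ teichmuller_mul_pow_mem_teichmullerIdeal (h ij.1 ij.2))

theorem teichmullerCoeff_mul_mem_of_mul_mem [IsBezout R] {I : Ideal R} {m n : ℕ}
    {x y : WittVector p R} (hxy : x * y ∈ teichmullerIdeal I (m + n))
    (h : ∀ i j, i + j ≤ m + n → (i, j) ≠ (m, n) →
      teichmullerCoeff i x * teichmullerCoeff j y ∈ I) :
    teichmullerCoeff m x * teichmullerCoeff n y ∈ I := by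
  have hsum := sub_mem hxy
    (mem_teichmullerIdeal_of_pow_dvd (pow_dvd_mul_sub_sum_teichmullerCoeff x y (m + n)))
  rw [sub_sub_cancel, ← Finset.add_sum_erase _ _ (a := (m, n)) (by simp),
    Submodule.add_mem_iff_left _ (sum_mem fun ij hij ↦
      teichmuller_mul_pow_mem_teichmullerIdeal fun hle ↦
        h ij.1 ij.2 hle (Finset.ne_of_mem_erase hij))] at hsum
  simpa only [teichmullerCoeff_teichmuller_mul_pow] using
    mem_teichmullerIdeal_iff.1 hsum (m + n) le_rfl

end TeichmullerExpansion

section GaussNorm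

theorem exists_eq_iSup_of_tendsto_zero {f : ℕ → ℝ≥0} (hf : Tendsto f atTop (𝓝 0)) :
    ∃ n, f n = ⨆ i, f i := by
  suffices h : ∃ n, ∀ i, f i ≤ f n by
    obtain ⟨n, hn⟩ := h
    exact ⟨n, le_antisymm (le_ciSup ⟨f n, Set.forall_mem_range.2 hn⟩ n) (ciSup_le hn)⟩
  by_cases hzero : ∀ i, f i = 0
  · exact ⟨0, fun i ↦ (hzero i).trans_le zero_le⟩
  · obtain ⟨k, hk⟩ := not_forall.1 hzero
    refine continuous_of_discreteTopology.exists_forall_ge' k ?_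
    rw [cocompact_eq_atTop]
    exact (hf.eventually_lt_const (pos_iff_ne_zero.2 hk)).mono fun _ ↦ le_of_lt

variable {p : ℕ} [Fact p.Prime] {A : Type*} [CommRing A] (v : Valuation A ℝ≥0)
  [CharP v.integer p] [PerfectRing v.integer p] {r : ℝ≥0}

/-- The `n`-th term `|xₙ| rⁿ` of the Gauss norm of radius `r` of `x = ∑ [xₙ] pⁿ`. -/
noncomputable def gaussTerm (r : ℝ≥0) (x : WittVector p v.integer) (n : ℕ) : ℝ≥0 :=
  v ((teichmullerCoeff n x : v.integer) : A) * r ^ n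

/-- The Gauss norm `supₙ |xₙ| rⁿ` of `x = ∑ [xₙ] pⁿ`; the supremum is finite for `r ≤ 1`. -/
noncomputable def gaussNorm (r : ℝ≥0) (x : WittVector p v.integer) : ℝ≥0 :=
  ⨆ n, gaussTerm v r x n

variable {v}

theorem gaussTerm_le_pow (r : ℝ≥0) (x : WittVector p v.integer) (n : ℕ) :
    gaussTerm v r x n ≤ r ^ n :=
  mul_le_of_le_one_left' (teichmullerCoeff n x).2

theorem gaussTerm_le_gaussNorm (hr : r ≤ 1) (x : WittVector p v.integer) (n : ℕ) :
    gaussTerm v r x n ≤ gaussNorm v r x :=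
  le_ciSup (f := gaussTerm v r x)
    ⟨1, Set.forall_mem_range.2 fun i ↦ (gaussTerm_le_pow r x i).trans (pow_le_one' hr i)⟩ n

theorem gaussNorm_le_one (hr : r ≤ 1) (x : WittVector p v.integer) : gaussNorm v r x ≤ 1 :=
  ciSup_le fun n ↦ (gaussTerm_le_pow r x n).trans (pow_le_one' hr n)

theorem exists_gaussTerm_eq_gaussNorm (hr : r < 1) (x : WittVector p v.integer) :
    ∃ n, gaussTerm v r x n = gaussNorm v r x :=
  exists_eq_iSup_of_tendsto_zero <| tendsto_of_tendsto_of_tendsto_of_le_of_le tendsto_const_nhds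
    (tendsto_pow_atTop_nhds_zero_of_lt_one zero_le hr) (fun _ ↦ zero_le) (gaussTerm_le_pow r x)

theorem gaussNorm_zero (r : ℝ≥0) : gaussNorm v r (0 : WittVector p v.integer) = 0 := by
  simp [gaussNorm, gaussTerm, teichmullerCoeff_zero]

theorem gaussNorm_one (hr : r ≤ 1) : gaussNorm v r (1 : WittVector p v.integer) = 1 := by
  refine le_antisymm (gaussNorm_le_one hr 1) ?_
  simpa [gaussTerm, teichmullerCoeff_zero_one] using
    gaussTerm_le_gaussNorm hr (1 : WittVector p v.integer) 0

theorem valuation_mul_mul_pow_le_gaussTerm_mul (hr : r ≤ 1) (x y : WittVector p v.integer)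
    {i j n : ℕ} (hij : i + j ≤ n) :
    v ((teichmullerCoeff i x * teichmullerCoeff j y : v.integer) : A) * r ^ n ≤
      gaussTerm v r x i * gaussTerm v r y j :=
  calc v ((teichmullerCoeff i x * teichmullerCoeff j y : v.integer) : A) * r ^ n
      ≤ v ((teichmullerCoeff i x * teichmullerCoeff j y : v.integer) : A) * r ^ (i + j) :=
        mul_le_mul_right (pow_le_pow_of_le_one zero_le hr hij) _
    _ = gaussTerm v r x i * gaussTerm v r y j := by
        rw [MulMemClass.coe_mul, map_mul, pow_add, mul_mul_mul_comm, gaussTerm, gaussTerm]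

theorem exists_first_gaussTerm_eq_gaussNorm (hr : r < 1) (x : WittVector p v.integer) :
    ∃ n, gaussTerm v r x n = gaussNorm v r x ∧ ∀ i < n, gaussTerm v r x i < gaussNorm v r x := by
  classical
  have h := exists_gaussTerm_eq_gaussNorm hr x
  exact ⟨Nat.find h, Nat.find_spec h, fun i hi ↦
    (gaussTerm_le_gaussNorm hr.le x i).lt_of_ne (Nat.find_min h hi)⟩

theorem gaussTerm_mul_gaussTerm_lt (hr : r ≤ 1) {x y : WittVector p v.integer}
    {m n i j : ℕ} (hx : gaussNorm v r x ≠ 0) (hy : gaussNorm v r y ≠ 0)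
    (hm : ∀ i < m, gaussTerm v r x i < gaussNorm v r x)
    (hn : ∀ j < n, gaussTerm v r y j < gaussNorm v r y)
    (hij : i + j ≤ m + n) (hne : (i, j) ≠ (m, n)) :
    gaussTerm v r x i * gaussTerm v r y j < gaussNorm v r x * gaussNorm v r y := by
  rcases lt_or_ge i m with hi | hi
  · exact mul_lt_mul_of_lt_of_le_of_nonneg_of_pos (hm i hi) (gaussTerm_le_gaussNorm hr y j)
      zero_le (pos_iff_ne_zero.2 hy)
  · have hj : j < n := by grind
    exact mul_lt_mul_of_le_of_lt_of_nonneg_of_pos (gaussTerm_le_gaussNorm hr x i) (hn j hj)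
      zero_le (pos_iff_ne_zero.2 hx)

variable [IsBezout v.integer]

theorem gaussNorm_le_iff_forall_mem_teichmullerIdeal (hr0 : 0 < r) (hr1 : r ≤ 1) {s : ℝ≥0}
    {x : WittVector p v.integer} :
    gaussNorm v r x ≤ s ↔ ∀ n, x ∈ teichmullerIdeal (v.leIdeal (s / r ^ n)) n := by
  simp only [mem_teichmullerIdeal_iff, Valuation.mem_leIdeal_iff, le_div_iff₀ (pow_pos hr0 _)]
  refine ⟨fun h n i hi ↦ ?_, fun h ↦ ciSup_le fun n ↦ h n n le_rfl⟩
  exact (mul_le_mul_right (pow_le_pow_of_le_one zero_le hr1 hi) _).trans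
    ((gaussTerm_le_gaussNorm hr1 x i).trans h)

theorem gaussNorm_add_le (hr0 : 0 < r) (hr1 : r ≤ 1) (x y : WittVector p v.integer) :
    gaussNorm v r (x + y) ≤ max (gaussNorm v r x) (gaussNorm v r y) := by
  have hmem {s : ℝ≥0} {z : WittVector p v.integer} :=
    gaussNorm_le_iff_forall_mem_teichmullerIdeal (s := s) (x := z) hr0 hr1
  exact hmem.2 fun n ↦ add_mem (hmem.1 (le_max_left _ _) n) (hmem.1 (le_max_right _ _) n)

theorem gaussNorm_mul_le (hr0 : 0 < r) (hr1 : r ≤ 1) (x y : WittVector p v.integer) :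
    gaussNorm v r (x * y) ≤ gaussNorm v r x * gaussNorm v r y := by
  refine (gaussNorm_le_iff_forall_mem_teichmullerIdeal hr0 hr1).2 fun n ↦
    mul_mem_teichmullerIdeal fun i j hij ↦ ?_
  rw [Valuation.mem_leIdeal_iff, le_div_iff₀ (pow_pos hr0 n)]
  exact (valuation_mul_mul_pow_le_gaussTerm_mul hr1 x y hij).trans
    (mul_le_mul' (gaussTerm_le_gaussNorm hr1 x i) (gaussTerm_le_gaussNorm hr1 y j))

/-- The first maximal terms `xₘ` and `yₙ` of the factors cannot be cancelled in degree `m + n`. -/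
theorem mul_gaussNorm_le (hr0 : 0 < r) (hr1 : r < 1) (x y : WittVector p v.integer) :
    gaussNorm v r x * gaussNorm v r y ≤ gaussNorm v r (x * y) := by
  rcases eq_or_ne (gaussNorm v r x) 0 with hx | hx
  · simp [hx]
  rcases eq_or_ne (gaussNorm v r y) 0 with hy | hy
  · simp [hy]
  obtain ⟨m, hm, hm_lt⟩ := exists_first_gaussTerm_eq_gaussNorm hr1 x
  obtain ⟨n, hn, hn_lt⟩ := exists_first_gaussTerm_eq_gaussNorm hr1 y
  by_contra! hlt
  have hpow : 0 < r ^ (m + n) := pow_pos hr0 _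
  let s : ℝ≥0ˣ := Units.mk0 (gaussNorm v r x * gaussNorm v r y / r ^ (m + n))
    (div_ne_zero (mul_ne_zero hx hy) hpow.ne')
  have mem_iff {a : v.integer} : a ∈ v.ltIdeal s ↔
      v (a : A) * r ^ (m + n) < gaussNorm v r x * gaussNorm v r y := lt_div_iff₀ hpow
  have hxy : x * y ∈ teichmullerIdeal (v.ltIdeal s) (m + n) :=
    mem_teichmullerIdeal_iff.2 fun i hi ↦ mem_iff.2 <|
      (mul_le_mul_right (pow_le_pow_of_le_one zero_le hr1.le hi) _).trans_lt
        ((gaussTerm_le_gaussNorm hr1.le (x * y) i).trans_lt hlt)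
  have hmn := teichmullerCoeff_mul_mem_of_mul_mem hxy fun i j hij hne ↦ mem_iff.2 <|
    (valuation_mul_mul_pow_le_gaussTerm_mul hr1.le x y hij).trans_lt
      (gaussTerm_mul_gaussTerm_lt hr1.le hx hy hm_lt hn_lt hij hne)
  refine (mem_iff.1 hmn).ne ?_
  rw [← hm, ← hn, gaussTerm, gaussTerm, pow_add, mul_mul_mul_comm]
  simp

variable (v) in
/-- The Gauss norm of radius `r` as a valuation on the ring of Witt vectors. -/
noncomputable def gaussValuation (hr0 : 0 < r) (hr1 : r < 1) :
    Valuation (WittVector p v.integer) ℝ≥0 where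
  toFun := gaussNorm v r
  map_zero' := gaussNorm_zero r
  map_one' := gaussNorm_one hr1.le
  map_mul' x y := (gaussNorm_mul_le hr0 hr1.le x y).antisymm (mul_gaussNorm_le hr0 hr1 x y)
  map_add_le_max' := gaussNorm_add_le hr0 hr1.le

end GaussNorm

section DecayIdeal

variable {ι R Γ₀ : Type*} [CommRing R] [LinearOrderedCommGroupWithZero Γ₀]
  {w : ι → Valuation R Γ₀}

/-- The ideal of those `x` for which, along the filter `l`, the valuations `w i x` are eventually
bounded by every power of `ρ i`. -/
def decayIdeal (hw : ∀ i x, w i x ≤ 1) (l : Filter ι) (ρ : ι → Γ₀) : Ideal R where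
  carrier := {x | ∀ n : ℕ, ∀ᶠ i in l, w i x ≤ ρ i ^ n}
  zero_mem' n := .of_forall fun i ↦ by simp
  add_mem' hx hy n := by
    filter_upwards [hx n, hy n] with i hxi hyi using (w i).map_add_le hxi hyi
  smul_mem' a x hx n := by
    filter_upwards [hx n] with i hxi
    rw [smul_eq_mul, map_mul]
    exact mul_le_of_le_one_of_le (hw i a) hxi

variable {hw : ∀ i x, w i x ≤ 1}

theorem mem_decayIdeal_iff {l : Filter ι} {ρ : ι → Γ₀} {x : R} :
    x ∈ decayIdeal hw l ρ ↔ ∀ n : ℕ, ∀ᶠ i in l, w i x ≤ ρ i ^ n :=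
  Iff.rfl

theorem decayIdeal_mono {l : Filter ι} {ρ σ : ι → Γ₀} (h : ρ ≤ᶠ[l] σ) :
    decayIdeal hw l ρ ≤ decayIdeal hw l σ := fun x hx n ↦ by
  filter_upwards [hx n, h] with i hxi hi using hxi.trans (pow_le_pow_left' hi n)

theorem decayIdeal_isPrime {U : Ultrafilter ι} {ρ : ι → Γ₀} (hρ : ∀ᶠ i in U, ρ i < 1) :
    (decayIdeal hw U ρ).IsPrime := by
  refine ⟨(Ideal.ne_top_iff_one _).2 fun h ↦ ?_, fun {x y} hxy ↦ ?_⟩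
  · obtain ⟨i, hi, hlt⟩ := ((mem_decayIdeal_iff.1 h 1).and hρ).exists
    rw [map_one, pow_one] at hi
    exact hi.not_gt hlt
  · by_contra! hnot
    simp only [mem_decayIdeal_iff, not_forall, ← Ultrafilter.eventually_not, not_le] at hnot
    obtain ⟨⟨m, hm⟩, n, hn⟩ := hnot
    obtain ⟨i, hmi, hni, hle⟩ := (hm.and (hn.and (mem_decayIdeal_iff.1 hxy (m + n)))).exists
    rw [map_mul, pow_add] at hle
    exact hle.not_gt (mul_lt_mul'' hmi hni zero_le zero_le)

end DecayIdeal

section GrowthIdeal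

variable (p : ℕ) [Fact p.Prime] {A : Type*} [CommRing A] (v : Valuation A ℝ≥0)

instance perfectRing_integer [PerfectRing A p] : PerfectRing v.integer p := by
  obtain ⟨hinj, hsurj⟩ := PerfectRing.bijective_frobenius (R := A) (p := p)
  refine ⟨fun x y hxy ↦ Subtype.ext (hinj (congrArg Subtype.val hxy)), fun x ↦ ?_⟩
  obtain ⟨y, hy⟩ := hsurj x
  have hvy : v y ≤ 1 := by
    rw [← pow_le_one_iff (Fact.out : p.Prime).ne_zero, ← map_pow]
    exact (congrArg v hy).trans_le x.2
  exact ⟨⟨y, hvy⟩, Subtype.ext hy⟩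

variable [CharP v.integer p] [PerfectRing v.integer p]

/-- The valuation `|a| ^ (1 / p ^ n)` of the `p ^ n`-th root of `a`. -/
noncomputable def rootValue (a : v.integer) (n : ℕ) : ℝ≥0 :=
  v ((frobeniusRoot p n a : v.integer) : A)

variable {v}

theorem rootValue_le_one (a : v.integer) (n : ℕ) : rootValue p v a n ≤ 1 :=
  (frobeniusRoot p n a).2

theorem rootValue_pow (a : v.integer) (n : ℕ) : rootValue p v a n ^ p ^ n = v (a : A) := by
  rw [rootValue, ← map_pow, ← SubmonoidClass.coe_pow, frobeniusRoot_pow]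

theorem rootValue_add_pow (a : v.integer) (m n : ℕ) :
    rootValue p v a (m + n) ^ p ^ n = rootValue p v a m := by
  rw [rootValue, rootValue, ← map_pow, ← SubmonoidClass.coe_pow, frobeniusRoot_add_pow]

theorem rootValue_pos {a : v.integer} (ha : 0 < v (a : A)) (n : ℕ) : 0 < rootValue p v a n :=
  (pow_pos_iff (pow_ne_zero n (Fact.out : p.Prime).ne_zero)).1 (by rwa [rootValue_pow])

theorem rootValue_lt_one {a : v.integer} (ha : v (a : A) < 1) (n : ℕ) : rootValue p v a n < 1 :=
  lt_of_pow_lt_pow_left₀ (p ^ n) zero_le (by rwa [rootValue_pow, one_pow])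

theorem rootValue_monotone (a : v.integer) : Monotone (rootValue p v a) := fun m n h ↦ by
  obtain ⟨k, rfl⟩ := Nat.exists_eq_add_of_le h
  rw [← rootValue_add_pow p a m k]
  exact pow_le_of_le_one zero_le (rootValue_le_one p a _)
    (pow_ne_zero k (Fact.out : p.Prime).ne_zero)

theorem rootValue_le_pow (a : v.integer) {m n d : ℕ} (h : m + d ≤ n) :
    rootValue p v a m ≤ rootValue p v a n ^ d := by
  calc rootValue p v a m = rootValue p v a (m + d) ^ p ^ d := (rootValue_add_pow p a m d).symm
    _ ≤ rootValue p v a (m + d) ^ d :=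
      pow_le_pow_of_le_one zero_le (rootValue_le_one p a _)
        (Nat.lt_pow_self (Fact.out : p.Prime).one_lt).le
    _ ≤ rootValue p v a n ^ d := pow_le_pow_left' (rootValue_monotone p a h) d

/-- The Witt vector `∑ₖ [a ^ (1 / p ^ f k)] p ^ (p ^ k²)`, whose decay is governed by `f`. The gaps
in the exponents make the term of index `k` the dominant one at radius `|a| ^ (1 / p ^ (k + 1)²)`:
the power of `p` in it has norm `|a| ^ (1 / p ^ (2 k + 1))`, and all later ones at most `|a|`. -/
noncomputable def lacunaryVector (a : v.integer) (f : ℕ → ℕ) : WittVector p v.integer :=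
  teichmullerSeries (Function.extend (fun k ↦ p ^ k ^ 2) (fun k ↦ frobeniusRoot p (f k) a) 0)

theorem gaussTerm_lacunaryVector (r : ℝ≥0) (a : v.integer) (f : ℕ → ℕ) (k : ℕ) :
    gaussTerm v r (lacunaryVector p a f) (p ^ k ^ 2) = rootValue p v a (f k) * r ^ p ^ k ^ 2 := by
  have hinj : Function.Injective fun k : ℕ ↦ p ^ k ^ 2 :=
    (Nat.pow_right_injective (Fact.out : p.Prime).two_le).comp (Nat.pow_left_injective two_ne_zero)
  rw [gaussTerm, lacunaryVector, teichmullerCoeff_teichmullerSeries, hinj.extend_apply, rootValue]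

theorem gaussTerm_lacunaryVector_of_forall_ne (r : ℝ≥0) (a : v.integer) (f : ℕ → ℕ) {n : ℕ}
    (hn : ∀ k, p ^ k ^ 2 ≠ n) : gaussTerm v r (lacunaryVector p a f) n = 0 := by
  rw [gaussTerm, lacunaryVector, teichmullerCoeff_teichmullerSeries,
    Function.extend_apply' _ _ _ (not_exists.2 hn)]
  simp

theorem gaussNorm_lacunaryVector_le (a : v.integer) {f : ℕ → ℕ} (hf : Monotone f) (k : ℕ) :
    gaussNorm v (rootValue p v a ((k + 1) ^ 2)) (lacunaryVector p a f) ≤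
      rootValue p v a (f k) := by
  refine ciSup_le fun n ↦ ?_
  by_cases hn : ∃ j, p ^ j ^ 2 = n
  · obtain ⟨j, rfl⟩ := hn
    rw [gaussTerm_lacunaryVector]
    rcases le_or_gt j k with hj | hj
    · exact mul_le_of_le_of_le_one (rootValue_monotone p a (hf hj))
        (pow_le_one' (rootValue_le_one p a _) _)
    · refine mul_le_of_le_one_of_le (rootValue_le_one p a _) ?_
      calc rootValue p v a ((k + 1) ^ 2) ^ p ^ j ^ 2
          ≤ rootValue p v a ((k + 1) ^ 2) ^ p ^ (k + 1) ^ 2 :=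
            pow_le_pow_of_le_one zero_le (rootValue_le_one p a _) <|
              Nat.pow_le_pow_right (Fact.out : p.Prime).pos (Nat.pow_le_pow_left hj 2)
        _ = rootValue p v a (f k) ^ p ^ f k := by rw [rootValue_pow, rootValue_pow]
        _ ≤ rootValue p v a (f k) := pow_le_of_le_one zero_le (rootValue_le_one p a _)
            (pow_ne_zero _ (Fact.out : p.Prime).ne_zero)
  · rw [gaussTerm_lacunaryVector_of_forall_ne p _ a f (not_exists.1 hn)]
    exact zero_le

theorem rootValue_sq_le_gaussNorm_lacunaryVector (a : v.integer) {f : ℕ → ℕ} {k : ℕ}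
    (hf : f k ≤ 2 * k + 1) :
    rootValue p v a (f k) ^ 2 ≤
      gaussNorm v (rootValue p v a ((k + 1) ^ 2)) (lacunaryVector p a f) :=
  calc rootValue p v a (f k) ^ 2
      ≤ rootValue p v a (f k) * rootValue p v a (2 * k + 1) := by
        rw [sq]
        exact mul_le_mul_right (rootValue_monotone p a hf) _
    _ = gaussTerm v (rootValue p v a ((k + 1) ^ 2)) (lacunaryVector p a f) (p ^ k ^ 2) := by
        rw [gaussTerm_lacunaryVector, show (k + 1) ^ 2 = 2 * k + 1 + k ^ 2 by ring,
          rootValue_add_pow]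
    _ ≤ _ := gaussTerm_le_gaussNorm (rootValue_le_one p a _) _ _

variable [IsBezout v.integer] {a : v.integer} (ha0 : 0 < v (a : A)) (ha1 : v (a : A) < 1)

/-- The prime ideal of Witt vectors whose Gauss norm of radius `|a| ^ (1 / p ^ (k + 1)²)` is,
along a nonprincipal ultrafilter in `k`, smaller than every power of `|a| ^ (1 / p ^ f k)`. -/
noncomputable def growthIdeal (f : ℕ → ℕ) : Ideal (WittVector p v.integer) :=
  decayIdeal (w := fun k ↦ gaussValuation v (rootValue_pos p ha0 ((k + 1) ^ 2))
      (rootValue_lt_one p ha1 ((k + 1) ^ 2)))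
    (fun _ ↦ gaussNorm_le_one (rootValue_le_one p a _)) (hyperfilter ℕ)
    fun k ↦ rootValue p v a (f k)

theorem growthIdeal_isPrime (f : ℕ → ℕ) : (growthIdeal p ha0 ha1 f).IsPrime :=
  decayIdeal_isPrime (.of_forall fun k ↦ rootValue_lt_one p ha1 (f k))

theorem lacunaryVector_mem_growthIdeal {f g : ℕ → ℕ} (hf : Monotone f)
    (hfg : ∀ d, ∀ᶠ k in atTop, f k + d ≤ g k) :
    lacunaryVector p a f ∈ growthIdeal p ha0 ha1 g := fun d ↦ by
  filter_upwards [Nat.hyperfilter_le_atTop (hfg d)] with k hk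
  exact (gaussNorm_lacunaryVector_le p a hf k).trans (rootValue_le_pow p a hk)

theorem lacunaryVector_notMem_growthIdeal {f : ℕ → ℕ} (hf : ∀ k, f k ≤ 2 * k + 1) :
    lacunaryVector p a f ∉ growthIdeal p ha0 ha1 f := fun h ↦ by
  obtain ⟨k, hk⟩ := (h 3).exists
  have hlt : rootValue p v a (f k) ^ 3 < rootValue p v a (f k) ^ 2 :=
    pow_lt_pow_right_of_lt_one₀ (rootValue_pos p ha0 _) (rootValue_lt_one p ha1 _) (by decide)
  exact ((rootValue_sq_le_gaussNorm_lacunaryVector p a (hf k)).trans hk).not_gt hlt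

theorem growthIdeal_lt_growthIdeal {f g : ℕ → ℕ} (hf : Monotone f) (hf_le : ∀ k, f k ≤ 2 * k + 1)
    (hfg : ∀ d, ∀ᶠ k in atTop, f k + d ≤ g k) :
    growthIdeal p ha0 ha1 f < growthIdeal p ha0 ha1 g :=
  SetLike.lt_iff_le_and_exists.2
    ⟨decayIdeal_mono <| Nat.hyperfilter_le_atTop <| (hfg 0).mono fun _ hk ↦
        rootValue_monotone p a hk,
      lacunaryVector p a f, lacunaryVector_mem_growthIdeal p ha0 ha1 hf hfg,
      lacunaryVector_notMem_growthIdeal p ha0 ha1 hf_le⟩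

end GrowthIdeal

theorem eventually_floor_mul_add_le_floor_mul {a b : ℝ} (ha : 0 ≤ a) (hab : a < b) (d : ℕ) :
    ∀ᶠ k : ℕ in atTop, ⌊a * k⌋₊ + d ≤ ⌊b * k⌋₊ := by
  have h : Tendsto (fun k : ℕ ↦ (b - a) * k) atTop atTop :=
    tendsto_natCast_atTop_atTop.const_mul_atTop (sub_pos.2 hab)
  filter_upwards [h.eventually_ge_atTop (d : ℝ)] with k hk
  rw [← Nat.floor_add_natCast (by positivity)]
  exact Nat.floor_le_floor (by linarith)

theorem wittVectors_perfectoid_uncountable_chain_of_primes_general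
    (p : ℕ) [Fact p.Prime] {A : Type*} [CommRing A] (v : Valuation A ℝ≥0)
    [CharP v.integer p] [PerfectRing v.integer p] [IsBezout v.integer]
    (hnontriv : ∃ x : A, 0 < v x ∧ v x < 1) :
    ∃ P : Set.Ioo (0 : ℝ) 1 → Ideal (WittVector p v.integer),
      (∀ l, (P l).IsPrime) ∧
      ∀ l m : Set.Ioo (0 : ℝ) 1, (l : ℝ) < (m : ℝ) → P l < P m := by
  obtain ⟨x, hx0, hx1⟩ := hnontriv
  let a : v.integer := ⟨x, hx1.le⟩
  refine ⟨fun l ↦ growthIdeal p (a := a) hx0 hx1 fun k ↦ ⌊(l : ℝ) * k⌋₊,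
    fun l ↦ growthIdeal_isPrime p hx0 hx1 _, fun l m hlm ↦ ?_⟩
  have hmono : Monotone fun k : ℕ ↦ ⌊(l : ℝ) * k⌋₊ := fun i j hij ↦
    Nat.floor_le_floor (mul_le_mul_of_nonneg_left (Nat.cast_le.2 hij) l.2.1.le)
  have hle (k : ℕ) : ⌊(l : ℝ) * k⌋₊ ≤ 2 * k + 1 :=
    (Nat.floor_le_of_le (mul_le_of_le_one_left k.cast_nonneg l.2.2.le)).trans (by lia)
  exact growthIdeal_lt_growthIdeal p hx0 hx1 hmono hle
    (eventually_floor_mul_add_le_floor_mul l.2.1.le hlm)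

/-- for a perfectoid field `F` of characteristic `p`, Fontaine's period ring
`A_inf = W(O_F)` (the `p`-typical Witt vectors of the ring of integers of `F`) has a
strictly increasing chain of prime ideals indexed by the real interval `(0,1)`; in
particular `W(O_F)` has uncountable Krull dimension. -/
theorem wittVectors_perfectoid_uncountable_chain_of_primes
    (p : ℕ) [Fact p.Prime] (F : Type) [Field F] [CharP F p]
    (v : Valuation F NNReal)
    (hnontriv : ∃ x : F, 0 < v x ∧ v x < 1)
    (hcomplete : ∀ f : ℕ → F,
      (∀ ε : NNReal, 0 < ε → ∃ N : ℕ, ∀ m ≥ N, ∀ n ≥ N, v (f m - f n) < ε) →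
      ∃ L : F, ∀ ε : NNReal, 0 < ε → ∃ N : ℕ, ∀ n ≥ N, v (f n - L) < ε)
    (hperf : Function.Bijective (fun x : F => x ^ p)) :
    ∃ P : Set.Ioo (0 : ℝ) 1 → Ideal (WittVector p v.integer),
      (∀ l, (P l).IsPrime) ∧
      ∀ l m : Set.Ioo (0 : ℝ) 1, (l : ℝ) < (m : ℝ) → P l < P m := by
  have : PerfectRing F p := ⟨hperf⟩
  exact wittVectors_perfectoid_uncountable_chain_of_primes_general p v hnontriv
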